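/- For every δ > 0 there exist n₀ and ε' > 0 such that every T⃗₃-free oriented graph G of order n ≥ n₀ with induced-P⃗₄ density d_{P⃗₄}(G) ≥ 24/125 − ε' contains at most δ n³ directed triangles (copies of the directed 3-cycle C⃗₃). -/

import Mathlib

open scoped Classical

/-- An oriented graph: the arc relation has no loops and no 2-cycles. -/
def IsOriented {V : Type*} (A : V → V → Prop) : Prop :=
  ∀ a b : V, A a b → ¬ A b a

/-- `T⃗₃`-freeness: no three vertices span the arcs a→b, b→c, a→c. -/
def T3Free {V : Type*} (A : V → V → Prop) : Prop :=
  ∀ a b c : V, ¬ (A a b ∧ A b c ∧ A a c)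

/-- `S` is the vertex set of an induced copy of the directed path `P⃗ₖ` in the
oriented graph with arc relation `A`. -/
def IsInducedPath {V : Type*} (A : V → V → Prop) (k : ℕ) (S : Finset V) : Prop :=
  ∃ f : Fin k → V, Function.Injective f ∧ (∀ v : V, v ∈ S ↔ ∃ i, f i = v) ∧
    ∀ i j : Fin k, A (f i) (f j) ↔ (j : ℕ) = (i : ℕ) + 1

/-- The number of induced copies of `P⃗ₖ`. -/
noncomputable def numPaths {V : Type*} [Fintype V] [DecidableEq V]
    (A : V → V → Prop) (k : ℕ) : ℕ :=
  (Finset.univ.filter fun S : Finset V => IsInducedPath A k S).card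

/-- The number of induced copies of `P⃗ₖ` containing all vertices of `T`. -/
noncomputable def numPathsThrough {V : Type*} [Fintype V] [DecidableEq V]
    (A : V → V → Prop) (k : ℕ) (T : Finset V) : ℕ :=
  (Finset.univ.filter fun S : Finset V => IsInducedPath A k S ∧ T ⊆ S).card

/-- The density of induced copies of `P⃗ₖ`. -/
noncomputable def pathDensity {V : Type*} [Fintype V] [DecidableEq V]
    (A : V → V → Prop) (k : ℕ) : ℝ :=
  (numPaths A k : ℝ) / ((Fintype.card V).choose k : ℝ)

/-- The maximum density of induced copies of `P⃗ₖ` over all `T⃗₃`-free oriented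
graphs on `n` vertices. -/
noncomputable def maxDensityT3 (k n : ℕ) : ℝ :=
  sSup {d : ℝ | ∃ A : Fin n → Fin n → Prop, IsOriented A ∧ T3Free A ∧ d = pathDensity A k}

/-- The maximum density of induced copies of `P⃗ₖ` over all oriented graphs on `n`
vertices. -/
noncomputable def maxDensityAll (k n : ℕ) : ℝ :=
  sSup {d : ℝ | ∃ A : Fin n → Fin n → Prop, IsOriented A ∧ d = pathDensity A k}

/-- `S` is the vertex set of an induced copy of the oriented graph `H` in the
oriented graph with arc relation `A`. -/
def IsInducedCopy {V W : Type*} (H : W → W → Prop) (A : V → V → Prop) (S : Finset V) : Prop :=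
  ∃ f : W → V, Function.Injective f ∧ (∀ v : V, v ∈ S ↔ ∃ w, f w = v) ∧
    ∀ a b : W, A (f a) (f b) ↔ H a b

/-- The number of induced copies of `H` in `A`. -/
noncomputable def numCopies {V W : Type*} [Fintype V] [DecidableEq V]
    (H : W → W → Prop) (A : V → V → Prop) : ℕ :=
  (Finset.univ.filter fun S : Finset V => IsInducedCopy H A S).card

/-- The number of (unordered) pairs of vertices on which the two oriented graphs `A`
and `B` differ (an arc must be added, removed, or reoriented). -/
noncomputable def pairDiff {V : Type*} [Fintype V] [LinearOrder V]
    (A B : V → V → Prop) : ℕ :=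
  (Finset.univ.filter fun p : V × V => p.1 < p.2 ∧
    ¬ ((A p.1 p.2 ↔ B p.1 p.2) ∧ (A p.2 p.1 ↔ B p.2 p.1))).card

/-- `A` is a blow-up of the directed 5-cycle with parts given by the fibers of `g`. -/
def IsBlowupC5 {V : Type*} (A : V → V → Prop) (g : V → Fin 5) : Prop :=
  ∀ u v : V, A u v ↔ g v = g u + 1

/-- The size of the part of vertices mapped to `i`. -/
noncomputable def partSize {V : Type*} [Fintype V] {m : ℕ} (g : V → Fin m) (i : Fin m) : ℕ :=
  (Finset.univ.filter fun v : V => g v = i).card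

/-- `A` is a balanced blow-up of the directed 5-cycle, i.e. isomorphic to `C⃗₅(n)`. -/
def IsBalancedBlowupC5 {V : Type*} [Fintype V] (A : V → V → Prop) : Prop :=
  ∃ g : V → Fin 5, IsBlowupC5 A g ∧
    ∀ i j : Fin 5, (partSize g i : ℤ) - (partSize g j : ℤ) ≤ 1
/-- The arc relation of the directed 3-cycle `C⃗₃` on `Fin 3`. -/
def C3rel : Fin 3 → Fin 3 → Prop := fun a b => b = a + 1


/-! ### The pointwise certificate

`xv vx yv vy` record the arcs x→v, v→x, y→v, v→y. -/

/-- Integer indicator of a Boolean. -/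
def ind : Bool → ℤ
  | true => 1
  | false => 0

lemma ind_eq (b : Bool) : ind b = if b then 1 else 0 := by cases b <;> rfl

def fOut (p q r s : Bool) : ℤ := ind (!p && q && !r && !s) - ind (!p && !q && r && !s)

def fIn (p q r s : Bool) : ℤ := ind (p && !q && !r && !s) - ind (!p && !q && !r && s)

def fBal (p q r s : Bool) : ℤ :=
  ind (!p && q && !r && !s) + ind (!p && !q && r && !s) - 2 * ind (!p && !q && !r && !s)

def hBal (p q r s : Bool) : ℤ :=
  3 * (ind (p && r) + ind (q && s)) + 8 * (ind (p && s) + ind (q && r))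
    - 2 * ind (!p && !q && !r && !s)
    - 2 * (ind ((p || q) && !r && !s) + ind (!p && !q && (r || s)))

def hSame (p q r s : Bool) : ℤ := ind (p && r) - ind (q && s)

def hOne (p q r s : Bool) : ℤ :=
  ind (p && !r && !s) + ind (!p && !q && r) - ind (q && !r && !s) - ind (!p && !q && s)

/-- Indicator of an ordered induced directed path. -/
def pathInd (ab ba ac ca ad da bc cb bd db cd dc : Bool) : ℤ :=
  ind (ab && bc && cd && !ba && !ac && !ca && !ad && !da && !cb && !bd && !db && !dc)

/-- The sum-of-squares part, on the tuple (x, y, u, v). -/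
def sosInd (xy yx xu ux xv vx yu uy yv vy : Bool) : ℤ :=
  ind xy * (12 * (fBal xu ux yu uy * fBal xv vx yv vy)
    + 624 * (fOut xu ux yu uy * fOut xv vx yv vy)
    + 54 * (fOut xu ux yu uy * fIn xv vx yv vy)
    + 54 * (fIn xu ux yu uy * fOut xv vx yv vy)
    + 168 * (fIn xu ux yu uy * fIn xv vx yv vy))
  + ind (!xy && !yx) * (6 * (hBal xu ux yu uy * hBal xv vx yv vy)
    + 186 * (hSame xu ux yu uy * hSame xv vx yv vy)
    + 108 * (hOne xu ux yu uy * hOne xv vx yv vy))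

/-- The function to be symmetrized. -/
def cert (ab ba ac ca ad da bc cb bd db cd dc : Bool) : ℤ :=
  24 - 3000 * pathInd ab ba ac ca ad da bc cb bd db cd dc
    - 100 * ind (ab && bc && ca)
    - sosInd ab ba ac ca ad da bc cb bd db

section symmetrization

variable {V : Type*}

def symTwo (f : V → V → V → V → ℤ) (a b c d : V) : ℤ := f a b c d + f b a c d

def symThree (f : V → V → V → V → ℤ) (a b c d : V) : ℤ :=
  f a b c d + f c b a d + f a c b d

def symFour (f : V → V → V → V → ℤ) (a b c d : V) : ℤ :=
  f a b c d + f d b c a + f a d c b + f a b d c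

variable [Fintype V]

def tot (f : V → V → V → V → ℤ) : ℤ := ∑ a, ∑ b, ∑ c, ∑ d, f a b c d

lemma tot_add (f g : V → V → V → V → ℤ) :
    tot (fun a b c d => f a b c d + g a b c d) = tot f + tot g := by
  simp [tot, Finset.sum_add_distrib]

lemma tot_swap12 (f : V → V → V → V → ℤ) : tot (fun a b c d => f b a c d) = tot f := by
  unfold tot; exact Finset.sum_comm

lemma tot_swap23 (f : V → V → V → V → ℤ) : tot (fun a b c d => f a c b d) = tot f := by
  unfold tot; exact Finset.sum_congr rfl fun a _ => Finset.sum_comm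

lemma tot_swap34 (f : V → V → V → V → ℤ) : tot (fun a b c d => f a b d c) = tot f := by
  unfold tot
  exact Finset.sum_congr rfl fun a _ => Finset.sum_congr rfl fun b _ => Finset.sum_comm

lemma tot_swap13 (f : V → V → V → V → ℤ) : tot (fun a b c d => f c b a d) = tot f := by
  rw [← tot_swap12 (fun a b c d => f c b a d), ← tot_swap23 (fun a b c d => f c a b d)]
  exact tot_swap12 f

lemma tot_swap24 (f : V → V → V → V → ℤ) : tot (fun a b c d => f a d c b) = tot f := by
  rw [← tot_swap23 (fun a b c d => f a d c b), ← tot_swap34 (fun a b c d => f a d b c)]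
  exact tot_swap23 f

lemma tot_swap14 (f : V → V → V → V → ℤ) : tot (fun a b c d => f d b c a) = tot f := by
  rw [← tot_swap12 (fun a b c d => f d b c a), ← tot_swap24 (fun a b c d => f d a c b)]
  exact tot_swap12 f

lemma tot_symTwo (f : V → V → V → V → ℤ) : tot (symTwo f) = 2 * tot f := by
  have : tot (symTwo f) = tot f + tot (fun a b c d => f b a c d) := by
    rw [← tot_add]; rfl
  rw [this, tot_swap12]; ring

lemma tot_symThree (f : V → V → V → V → ℤ) : tot (symThree f) = 3 * tot f := by
  have : tot (symThree f) = tot f + tot (fun a b c d => f c b a d)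
      + tot (fun a b c d => f a c b d) := by
    rw [← tot_add, ← tot_add]; rfl
  rw [this, tot_swap13 f, tot_swap23 f]; ring

lemma tot_symFour (f : V → V → V → V → ℤ) : tot (symFour f) = 4 * tot f := by
  have : tot (symFour f) = tot f + tot (fun a b c d => f d b c a)
      + tot (fun a b c d => f a d c b) + tot (fun a b c d => f a b d c) := by
    rw [← tot_add, ← tot_add, ← tot_add]; rfl
  rw [this, tot_swap14 f, tot_swap24 f, tot_swap34 f]; ring

end symmetrization

/-- Four labels. -/
inductive Lab : Type
  | p | q | r | s

/-- A Boolean adjacency matrix on four labels given by its twelve off-diagonal entries. -/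
def mat4 (ab ba ac ca ad da bc cb bd db cd dc : Bool) (i j : Lab) : Bool :=
  match i with
  | .p => match j with
    | .p => false | .q => ab | .r => ac | .s => ad
  | .q => match j with
    | .p => ba | .q => false | .r => bc | .s => bd
  | .r => match j with
    | .p => ca | .q => cb | .r => false | .s => cd
  | .s => match j with
    | .p => da | .q => db | .r => dc | .s => false

/-- `cert` evaluated on a tuple of vertices. -/
def certAt {V : Type*} (w : V → V → Bool) (a b c d : V) : ℤ :=
  cert (w a b) (w b a) (w a c) (w c a) (w a d) (w d a) (w b c) (w c b) (w b d) (w d b)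
    (w c d) (w d c)

/-- No transitive triangle on three vertices, as a Boolean. -/
def okTri (xy yx xz zx yz zy : Bool) : Bool :=
  !(xy && yz && xz) && !(xz && zy && xy) && !(yx && xz && yz) && !(yz && zx && yx)
    && !(zx && xy && zy) && !(zy && yx && zx)

set_option maxRecDepth 100000 in
lemma cert_sym_nonneg : ∀ ab ba : Bool, !(ab && ba) → ∀ ac ca : Bool, !(ac && ca) →
    ∀ bc cb : Bool, !(bc && cb) → okTri ab ba ac ca bc cb →
    ∀ ad da : Bool, !(ad && da) → ∀ bd db : Bool, !(bd && db) → okTri ab ba ad da bd db →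
    ∀ cd dc : Bool, !(cd && dc) → okTri ac ca ad da cd dc → okTri bc cb bd db cd dc →
    0 ≤ symFour (symThree (symTwo (certAt (mat4 ab ba ac ca ad da bc cb bd db cd dc))))
      .p .q .r .s := by
  decide +kernel

section counting

variable {V : Type*} [Fintype V]

lemma tot_cert_nonneg (w : V → V → Bool) (hw : ∀ a b, !(w a b && w b a))
    (ht : ∀ a b c, !(w a b && w b c && w a c)) : 0 ≤ tot (certAt w) := by
  have key : 0 ≤ tot (symFour (symThree (symTwo (certAt w)))) := by
    unfold tot
    refine Finset.sum_nonneg fun a _ => Finset.sum_nonneg fun b _ =>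
      Finset.sum_nonneg fun c _ => Finset.sum_nonneg fun d _ => ?_
    have ok : ∀ x y z, okTri (w x y) (w y x) (w x z) (w z x) (w y z) (w z y) = true := by
      intro x y z
      simp only [okTri, Bool.and_eq_true]
      exact ⟨⟨⟨⟨⟨ht x y z, ht x z y⟩, ht y x z⟩, ht y z x⟩, ht z x y⟩, ht z y x⟩
    exact cert_sym_nonneg _ _ (hw a b) _ _ (hw a c) _ _ (hw b c) (ok a b c) _ _ (hw a d)
      _ _ (hw b d) (ok a b d) _ _ (hw c d) (ok a c d) (ok b c d)
  rw [tot_symFour, tot_symThree, tot_symTwo] at key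
  linarith

lemma sum_sq_form (f g : V → ℤ) : ∑ u, ∑ v, f u * g v = (∑ u, f u) * (∑ v, g v) := by
  rw [Finset.sum_mul_sum]

lemma ind_nonneg (b : Bool) : 0 ≤ ind b := by cases b <;> decide

lemma sos_nonneg (w : V → V → Bool) :
    0 ≤ tot (fun x y u v => sosInd (w x y) (w y x) (w x u) (w u x) (w x v) (w v x)
      (w y u) (w u y) (w y v) (w v y)) := by
  unfold tot
  refine Finset.sum_nonneg fun x _ => Finset.sum_nonneg fun y _ => ?_
  simp only [sosInd, Finset.sum_add_distrib, ← Finset.mul_sum, ← Finset.sum_mul]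
  refine add_nonneg (mul_nonneg (ind_nonneg _) ?_) (mul_nonneg (ind_nonneg _) ?_)
  · set P := ∑ v, fBal (w x v) (w v x) (w y v) (w v y)
    set Q := ∑ v, fOut (w x v) (w v x) (w y v) (w v y)
    set R := ∑ v, fIn (w x v) (w v x) (w y v) (w v y)
    nlinarith [sq_nonneg P, sq_nonneg Q, sq_nonneg R, sq_nonneg (Q + R)]
  · set P := ∑ v, hBal (w x v) (w v x) (w y v) (w v y)
    set Q := ∑ v, hSame (w x v) (w v x) (w y v) (w v y)
    set R := ∑ v, hOne (w x v) (w v x) (w y v) (w v y)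
    nlinarith [sq_nonneg P, sq_nonneg Q, sq_nonneg R]

/-- Number of ordered induced paths. -/
def ordPaths (w : V → V → Bool) : ℤ :=
  tot fun a b c d => pathInd (w a b) (w b a) (w a c) (w c a) (w a d) (w d a) (w b c) (w c b)
    (w b d) (w d b) (w c d) (w d c)

/-- Number of ordered directed triangles. -/
def ordTris (w : V → V → Bool) : ℤ := ∑ a, ∑ b, ∑ c, ind (w a b && w b c && w c a)

lemma main_ineq (w : V → V → Bool) (hw : ∀ a b, !(w a b && w b a))
    (ht : ∀ a b c, !(w a b && w b c && w a c)) :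
    3000 * ordPaths w + 100 * (Fintype.card V * ordTris w) ≤ 24 * (Fintype.card V : ℤ) ^ 4 := by
  have h1 := tot_cert_nonneg w hw ht
  have h2 := sos_nonneg w
  have e : tot (certAt w) = 24 * (Fintype.card V : ℤ) ^ 4 - 3000 * ordPaths w
      - 100 * (Fintype.card V * ordTris w)
      - tot (fun x y u v => sosInd (w x y) (w y x) (w x u) (w u x) (w x v) (w v x)
      (w y u) (w u y) (w y v) (w v y)) := by
    simp only [tot, certAt, cert, ordPaths, ordTris, Finset.sum_sub_distrib, Finset.sum_const,
      Finset.card_univ, nsmul_eq_mul, ← Finset.mul_sum]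
    ring
  linarith

end counting

lemma numPaths_le {V : Type*} [Fintype V] [DecidableEq V] (A : V → V → Prop) :
    (numPaths A 4 : ℤ) ≤ ordPaths fun a b => decide (A a b) := by
  have e : ordPaths (fun a b => decide (A a b)) =
      ((Finset.univ.filter fun p : V × V × V × V =>
        A p.1 p.2.1 ∧ A p.2.1 p.2.2.1 ∧ A p.2.2.1 p.2.2.2 ∧ ¬ A p.2.1 p.1 ∧ ¬ A p.1 p.2.2.1 ∧
        ¬ A p.2.2.1 p.1 ∧ ¬ A p.1 p.2.2.2 ∧ ¬ A p.2.2.2 p.1 ∧ ¬ A p.2.2.1 p.2.1 ∧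
        ¬ A p.2.1 p.2.2.2 ∧ ¬ A p.2.2.2 p.2.1 ∧ ¬ A p.2.2.2 p.2.2.1).card : ℤ) := by
    rw [Finset.card_filter]
    push_cast
    simp only [Fintype.sum_prod_type, ordPaths, tot, pathInd, ind_eq]
    simp [and_assoc]
  rw [e]
  have : (Finset.univ.filter fun S : Finset V => IsInducedPath A 4 S) ⊆
      (Finset.univ.filter fun p : V × V × V × V =>
        A p.1 p.2.1 ∧ A p.2.1 p.2.2.1 ∧ A p.2.2.1 p.2.2.2 ∧ ¬ A p.2.1 p.1 ∧ ¬ A p.1 p.2.2.1 ∧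
        ¬ A p.2.2.1 p.1 ∧ ¬ A p.1 p.2.2.2 ∧ ¬ A p.2.2.2 p.1 ∧ ¬ A p.2.2.1 p.2.1 ∧
        ¬ A p.2.1 p.2.2.2 ∧ ¬ A p.2.2.2 p.2.1 ∧ ¬ A p.2.2.2 p.2.2.1).image
        (fun p => {p.1, p.2.1, p.2.2.1, p.2.2.2}) := by
    intro S hS
    obtain ⟨f, -, h1, h2⟩ := (Finset.mem_filter.1 hS).2
    refine Finset.mem_image.2 ⟨(f 0, f 1, f 2, f 3), ?_, ?_⟩
    · simp only [Finset.mem_filter, Finset.mem_univ, true_and]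
      simp [h2]
    · ext v
      rw [h1 v]
      simp [Fin.exists_fin_succ, eq_comm]
  exact_mod_cast (Finset.card_le_card this).trans Finset.card_image_le

lemma numCopies_le {V : Type*} [Fintype V] [DecidableEq V] (A : V → V → Prop) :
    (numCopies C3rel A : ℤ) ≤ ordTris fun a b => decide (A a b) := by
  have e : ordTris (fun a b => decide (A a b)) =
      ((Finset.univ.filter fun p : V × V × V =>
        A p.1 p.2.1 ∧ A p.2.1 p.2.2 ∧ A p.2.2 p.1).card : ℤ) := by
    rw [Finset.card_filter]
    push_cast
    simp only [Fintype.sum_prod_type, ordTris, ind_eq]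
    simp [and_assoc]
  rw [e]
  have : (Finset.univ.filter fun S : Finset V => IsInducedCopy C3rel A S) ⊆
      (Finset.univ.filter fun p : V × V × V =>
        A p.1 p.2.1 ∧ A p.2.1 p.2.2 ∧ A p.2.2 p.1).image
        (fun p => {p.1, p.2.1, p.2.2}) := by
    intro S hS
    obtain ⟨f, -, h1, h2⟩ := (Finset.mem_filter.1 hS).2
    refine Finset.mem_image.2 ⟨(f 0, f 1, f 2), ?_, ?_⟩
    · simp only [Finset.mem_filter, Finset.mem_univ, true_and]
      exact ⟨(h2 0 1).2 rfl, (h2 1 2).2 rfl, (h2 2 0).2 rfl⟩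
    · ext v
      rw [h1 v]
      simp [Fin.exists_fin_succ, eq_comm]
  exact_mod_cast (Finset.card_le_card this).trans Finset.card_image_le

lemma choose_four_lower (n : ℕ) : ((n : ℝ) ^ 4 - 6 * n ^ 3) ≤ 24 * (n.choose 4 : ℝ) := by
  rcases lt_or_ge n 6 with h | h
  · have : (n : ℝ) ^ 4 - 6 * n ^ 3 ≤ 0 := by
      have h6 : (n : ℝ) ≤ 6 := by exact_mod_cast h.le
      have h0 : (0 : ℝ) ≤ (n : ℝ) ^ 3 := by positivity
      nlinarith
    have h0 : (0 : ℝ) ≤ (n.choose 4 : ℝ) := by positivity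
    linarith
  · obtain ⟨m, rfl⟩ : ∃ m, n = m + 3 := ⟨n - 3, by omega⟩
    have e : (m + 3).choose 4 * 24 = (m + 3) * (m + 2) * (m + 1) * m := by
      have := Nat.descFactorial_eq_factorial_mul_choose (m + 3) 4
      simp [Nat.descFactorial, Nat.factorial] at this
      linarith
    have e' : ((m + 3).choose 4 : ℝ) * 24 = (m + 3) * (m + 2) * (m + 1) * m := by
      exact_mod_cast e
    push_cast
    have hm : (0 : ℝ) ≤ m := by positivity
    nlinarith [pow_nonneg hm 2, pow_nonneg hm 3]

/-- For every `δ > 0` there are `n₀` and `ε' > 0` such that every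
`T⃗₃`-free oriented graph on `n ≥ n₀` vertices with `d_{P⃗₄} ≥ 24/125 − ε'` contains at
most `δ n³` directed triangles. -/
theorem few_directed_triangles :
    ∀ δ : ℝ, 0 < δ → ∃ (n₀ : ℕ) (ε' : ℝ), 0 < ε' ∧
      ∀ n : ℕ, n₀ ≤ n → ∀ A : Fin n → Fin n → Prop, IsOriented A → T3Free A →
        24 / 125 - ε' ≤ pathDensity A 4 →
        (numCopies C3rel A : ℝ) ≤ δ * (n : ℝ) ^ 3 := by
  intro δ hδ
  refine ⟨⌈3 / δ⌉₊ + 1, min (24 / 125) (δ / 4), by positivity, ?_⟩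
  intro n hn A hO hT hd
  have hn1 : 1 ≤ n := by omega
  have hn0 : (0 : ℝ) < n := by exact_mod_cast hn1
  have hδn : 3 ≤ δ * n := by
    have h1 : 3 / δ ≤ n := (Nat.le_ceil _).trans (by exact_mod_cast (by omega))
    rw [div_le_iff₀ hδ] at h1
    linarith
  have hmain := main_ineq (fun a b => decide (A a b))
    (by intro a b; have := hO a b; simp; tauto)
    (by intro a b c; have := hT a b c; simp; tauto)
  have hP := numPaths_le A
  have hC := numCopies_le A
  have hfin : 3000 * (numPaths A 4 : ℤ) + 100 * ((n : ℤ) * numCopies C3rel A)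
      ≤ 24 * (n : ℤ) ^ 4 := by
    rw [Fintype.card_fin] at hmain
    have := mul_le_mul_of_nonneg_left hC (Int.natCast_nonneg n)
    linarith
  have hfinR : 3000 * (numPaths A 4 : ℝ) + 100 * ((n : ℝ) * numCopies C3rel A)
      ≤ 24 * (n : ℝ) ^ 4 := by exact_mod_cast hfin
  set ε := min (24 / 125) (δ / 4) with hε
  have hε1 : ε ≤ 24 / 125 := min_le_left _ _
  have hε2 : ε ≤ δ / 4 := min_le_right _ _
  have hε0 : 0 < ε := by positivity
  have hlow : (24 / 125 - ε) * (n.choose 4 : ℝ) ≤ numPaths A 4 := by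
    unfold pathDensity at hd
    rw [Fintype.card_fin] at hd
    rcases Nat.eq_zero_or_pos (n.choose 4) with h | h
    · rw [h]; simp
    · rwa [le_div_iff₀ (by exact_mod_cast h)] at hd
  have hch := choose_four_lower n
  have h1 : (24 / 125 - ε) * ((n : ℝ) ^ 4 - 6 * n ^ 3) ≤ 24 * numPaths A 4 := by
    have := mul_le_mul_of_nonneg_left hch (sub_nonneg.2 hε1)
    linarith
  have h3 : 0 ≤ (n : ℝ) ^ 3 := by positivity
  have h4 : (n : ℝ) * (100 * numCopies C3rel A) ≤ n * (100 * (δ * (n : ℝ) ^ 3)) := by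
    have a1 : ε * (n : ℝ) ^ 4 ≤ δ / 4 * (n : ℝ) ^ 4 :=
      mul_le_mul_of_nonneg_right hε2 (by positivity)
    have a2 : 3 * (n : ℝ) ^ 3 ≤ δ * n * (n : ℝ) ^ 3 := mul_le_mul_of_nonneg_right hδn h3
    have a3 : 0 ≤ ε * (n : ℝ) ^ 3 := by positivity
    have e4 : (n : ℝ) ^ 4 = n * n ^ 3 := by ring
    nlinarith
  have := le_of_mul_le_mul_left h4 hn0
  linarith
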